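/- Define the regular part PA^{reg}(q) = D(q) - q² A(q) · ( (a(q);q)_∞ (v(q);q)_∞ / ((q;q)_∞ (a(q)v(q);q)_∞) ) · V(q). Then even though A(q) and D(q) each have a double pole at q = 1/2, the double-pole contributions cancel: PA^{reg}(q) - 1/(1-2q) extends to a function analytic in a neighbourhood of q = 1/2. In particular, PA^{reg} has at q = 1/2 only a simple pole, with singular part exactly 1/(1-2q). -/

import Mathlib

open Complex Filter Asymptotics Topology

noncomputable section

/-- finite q-Pochhammer symbol `(x;q)_n` -/
def qPF (x q : ℂ) (n : ℕ) : ℂ := ∏ i ∈ Finset.range n, (1 - x * q ^ i)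

/-- infinite q-Pochhammer symbol `(x;q)_∞` -/
def qPI (x q : ℂ) : ℂ := ∏' i : ℕ, (1 - x * q ^ i)

def uF (q : ℂ) : ℂ := q / (1 - q)
def vF (q : ℂ) : ℂ := (1 - q + q ^ 2) / (1 - q)
def aF (q : ℂ) : ℂ := q ^ 2 / (1 - q + q ^ 2)
def AF (q : ℂ) : ℂ := 2 * q * (1 - q) ^ 2 / (1 - 2 * q) ^ 2
def CF (q : ℂ) : ℂ := 2 * q * (3 - 10 * q + 9 * q ^ 2 - q ^ 3) / ((1 - q) * (1 - 2 * q) ^ 2)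
def DF (q : ℂ) : ℂ := CF q - (q ^ 2 / (1 - q) ^ 2) * AF q * qPI (vF q) q / qPI (aF q * vF q) q

/-- the `m`-th term (for `m ≥ 1`) of the explicit series for `PA(q)` -/
def PAterm (q : ℂ) (m : ℕ) : ℂ :=
  (-1) ^ m * q ^ (2 * m) / ((1 - 2 * q) ^ m * (1 - q - q ^ (m + 1))) *
    ∏ k ∈ Finset.Icc 1 (m - 1),
      ((1 - q - q ^ k + q ^ (k + 1) - q ^ (k + 2)) / (1 - q - q ^ (k + 1)))

/-- the explicit convergent series defining `PA(q)` for small `q` -/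
def PAseries (q : ℂ) : ℂ :=
  (-2 * q ^ 3 * (1 - q) ^ 2 / (1 - 2 * q) ^ 2) * (∑' m : ℕ, PAterm q (m + 1))
    + 2 * q * (3 - 10 * q + 9 * q ^ 2 - q ^ 3) / ((1 - 2 * q) ^ 2 * (1 - q))

/-- the `r`-th term of the series in the regular series `V(q)` -/
def VtermC (q : ℂ) (r : ℕ) : ℂ :=
  (qPF ((aF q)⁻¹ * (vF q)⁻¹ * q) q r / qPF ((vF q)⁻¹ * q) q r) *
    (-(aF q) * (1 - 2 * q) / q ^ 2) ^ r

/-- the regular series `V(q)` -/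
def VfunC (q : ℂ) : ℂ :=
  -(qPI q q / qPI (aF q) q) * ((1 / q ^ 2) / (1 + (1 - 2 * q) / q ^ 2)) +
    (1 / q ^ 2) * (qPI q q * qPI (aF q * vF q) q / (qPI (aF q) q * qPI (vF q) q)) *
      ∑' r : ℕ, VtermC q r

/-- the regular part `PA^{reg}(q)` -/
def PAreg (q : ℂ) : ℂ :=
  DF q - q ^ 2 * AF q *
    (qPI (aF q) q * qPI (vF q) q / (qPI q q * qPI (aF q * vF q) q)) * VfunC q

/-!
The infinite products in `PAreg` cancel, leaving `PAreg = CF - AF * ∑ VtermC`, where the series is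
the `₂φ₁` series with numerator parameter `c = (1 - q) / q`, denominator parameter
`b = q (1 - q) / (1 - q + q²)` and argument `z = -(1 - 2q) / (1 - q + q²)`. Both `1 - c` and `z` are
multiples of `1 - 2q`, so splitting off the first term gives `∑ VtermC = 1 + (1 - 2q)² * h` with `h`
analytic at `1 / 2`, by the ratio test made uniform near `1 / 2`. Hence `AF * (∑ VtermC - 1)` is
analytic there, while `CF - AF = 1 / (1 - 2q) + (3q - 1) / (1 - q)`.
-/

section UniformRatioTest

lemma exists_eventually_forall_ge_of_eventually_atTop_prod {α ι : Type*} [Preorder ι]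
    [IsDirectedOrder ι] [Nonempty ι] {l : Filter α} {P : ι → α → Prop}
    (h : ∀ᶠ p in atTop ×ˢ l, P p.1 p.2) : ∃ N, ∀ᶠ y in l, ∀ n ≥ N, P n y := by
  obtain ⟨pn, hpn, py, hpy, hP⟩ := eventually_prod_iff.mp h
  obtain ⟨N, hN⟩ := eventually_atTop.mp hpn
  exact ⟨N, hpy.mono fun y hy n hn => hP (hN n hn) hy⟩

variable {E : Type*} [NormedAddCommGroup E] [NormedSpace ℂ E] [CompleteSpace E]

lemma analyticAt_tsum_of_norm_le {ι : Type*} {f : ι → ℂ → E} {u : ι → ℝ} {x : ℂ} (hu : Summable u)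
    (hf : ∀ᶠ y in 𝓝 x, ∀ n, AnalyticAt ℂ (f n) y) (hfu : ∀ᶠ y in 𝓝 x, ∀ n, ‖f n y‖ ≤ u n) :
    AnalyticAt ℂ (fun y => ∑' n, f n y) x := by
  obtain ⟨U, hU, hU_open, hxU⟩ := eventually_nhds_iff.mp (hf.and hfu)
  exact (differentiableOn_tsum_of_summable_norm hu
    (fun n y hy => ((hU y hy).1 n).differentiableAt.differentiableWithinAt) hU_open
    fun n y hy => (hU y hy).2 n).analyticAt (hU_open.mem_nhds hxU)

theorem analyticAt_tsum_of_ratio_norm_eventually_le {f : ℕ → ℂ → E} {k : ℝ} {x : ℂ}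
    (hk₀ : 0 ≤ k) (hk₁ : k < 1) (hf : ∀ᶠ y in 𝓝 x, ∀ n, AnalyticAt ℂ (f n) y)
    (hratio : ∀ᶠ p in atTop ×ˢ 𝓝 x, ‖f (p.1 + 1) p.2‖ ≤ k * ‖f p.1 p.2‖) :
    AnalyticAt ℂ (fun y => ∑' n, f n y) x := by
  obtain ⟨N, hN⟩ := exists_eventually_forall_ge_of_eventually_atTop_prod
    (P := fun n y => ‖f (n + 1) y‖ ≤ k * ‖f n y‖) hratio
  have head_lt : ∀ᶠ y in 𝓝 x, ‖f N y‖ < ‖f N x‖ + 1 :=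
    (hf.self_of_nhds N).continuousAt.norm.eventually_lt_const (lt_add_one _)
  have tail_le : ∀ᶠ y in 𝓝 x, ∀ n, ‖f (n + N) y‖ ≤ k ^ n * (‖f N x‖ + 1) := by
    filter_upwards [hN, head_lt] with y hy hhead n
    calc ‖f (n + N) y‖ ≤ k ^ n * ‖f (0 + N) y‖ :=
          le_geom (u := fun n => ‖f (n + N) y‖) hk₀ n fun m _ => by
            simpa only [Nat.add_right_comm] using hy (m + N) (Nat.le_add_left N m)
      _ ≤ k ^ n * (‖f N x‖ + 1) := by rw [zero_add]; gcongr
  have tail_analytic : AnalyticAt ℂ (fun y => ∑' n, f (n + N) y) x :=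
    analyticAt_tsum_of_norm_le ((summable_geometric_of_lt_one hk₀ hk₁).mul_right _)
      (hf.mono fun y hy n => hy (n + N)) tail_le
  have head_analytic : AnalyticAt ℂ (fun y => ∑ n ∈ Finset.range N, f n y) x :=
    Finset.analyticAt_fun_sum _ fun n _ => hf.self_of_nhds n
  refine (head_analytic.add tail_analytic).congr ?_
  filter_upwards [hN] with y hy
  exact (summable_of_ratio_norm_eventually_le hk₁
    (eventually_atTop.mpr ⟨N, hy⟩)).sum_add_tsum_nat_add N

end UniformRatioTest

section MulPow

variable {𝕜 : Type*} [NormedDivisionRing 𝕜] {q₀ : 𝕜}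

lemma one_sub_mul_pow_ne_zero {x q : 𝕜} (hx : ‖x‖ < 1) (hq : ‖q‖ ≤ 1) (i : ℕ) :
    1 - x * q ^ i ≠ 0 := by
  have norm_lt : ‖x * q ^ i‖ < 1 := by
    rw [norm_mul, norm_pow]
    exact mul_lt_one_of_nonneg_of_lt_one_left (norm_nonneg x) hx (pow_le_one₀ (norm_nonneg q) hq)
  rw [sub_ne_zero]
  intro h
  rw [← h, norm_one] at norm_lt
  exact norm_lt.false

lemma tendsto_mul_pow_atTop_prod_nhds {x : 𝕜 → 𝕜} (hx : ContinuousAt x q₀) (hq₀ : ‖q₀‖ < 1) :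
    Tendsto (fun p : ℕ × 𝕜 => x p.2 * p.2 ^ p.1) (atTop ×ˢ 𝓝 q₀) (𝓝 0) := by
  obtain ⟨r, hr, hr₁⟩ := exists_between hq₀
  have hr₀ : 0 ≤ r := (norm_nonneg q₀).trans hr.le
  have norm_lt : ∀ᶠ p : ℕ × 𝕜 in atTop ×ˢ 𝓝 q₀, ‖p.2‖ < r :=
    (continuousAt_id.norm.eventually_lt_const hr).prod_inr atTop
  have tendsto_pow : Tendsto (fun p : ℕ × 𝕜 => p.2 ^ p.1) (atTop ×ˢ 𝓝 q₀) (𝓝 0) := by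
    refine squeeze_zero_norm' (norm_lt.mono fun p hp => ?_)
      ((tendsto_pow_atTop_nhds_zero_of_lt_one hr₀ hr₁).comp tendsto_fst)
    rw [norm_pow]
    exact pow_le_pow_left₀ (norm_nonneg _) hp.le _
  simpa only [mul_zero] using! (hx.tendsto.comp tendsto_snd).mul tendsto_pow

lemma eventually_forall_one_sub_mul_pow_ne_zero {x : 𝕜 → 𝕜} (hx : ContinuousAt x q₀)
    (hq₀ : ‖q₀‖ < 1) (h : ∀ i : ℕ, 1 - x q₀ * q₀ ^ i ≠ 0) :
    ∀ᶠ q in 𝓝 q₀, ∀ i : ℕ, 1 - x q * q ^ i ≠ 0 := by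
  have tendsto_one := (tendsto_mul_pow_atTop_prod_nhds hx hq₀).const_sub 1
  rw [sub_zero] at tendsto_one
  obtain ⟨N, hN⟩ := exists_eventually_forall_ge_of_eventually_atTop_prod
    (P := fun (i : ℕ) q => 1 - x q * q ^ i ≠ 0) (tendsto_one.eventually_ne one_ne_zero)
  have initial : ∀ᶠ q in 𝓝 q₀, ∀ i ∈ Finset.range N, 1 - x q * q ^ i ≠ 0 :=
    (Filter.eventually_all_finset _).mpr fun i _ =>
      (continuousAt_const.sub (hx.mul (continuousAt_id.pow i))).eventually_ne (h i)
  filter_upwards [hN, initial] with q hge hlt i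
  rcases lt_or_ge i N with hi | hi
  · exact hlt i (Finset.mem_range.mpr hi)
  · exact hge i hi

end MulPow

section Pochhammer

lemma qPF_succ (x q : ℂ) (n : ℕ) : qPF x q (n + 1) = qPF x q n * (1 - x * q ^ n) :=
  Finset.prod_range_succ _ n

lemma qPF_succ' (x q : ℂ) (n : ℕ) : qPF x q (n + 1) = (1 - x) * qPF (x * q) q n := by
  simp only [qPF, Finset.prod_range_succ', pow_zero, mul_one, pow_succ', ← mul_assoc]
  exact mul_comm _ _

lemma qPF_ne_zero {x q : ℂ} (h : ∀ i : ℕ, 1 - x * q ^ i ≠ 0) (n : ℕ) : qPF x q n ≠ 0 :=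
  Finset.prod_ne_zero_iff.mpr fun i _ => h i

lemma analyticAt_qPF {x : ℂ → ℂ} {q₀ : ℂ} (hx : AnalyticAt ℂ x q₀) (n : ℕ) :
    AnalyticAt ℂ (fun q => qPF (x q) q n) q₀ :=
  Finset.analyticAt_fun_prod _ fun i _ => analyticAt_const.sub (hx.mul (analyticAt_id.pow i))

lemma qPI_ne_zero {x q : ℂ} (hq : ‖q‖ < 1) (h : ∀ i : ℕ, 1 - x * q ^ i ≠ 0) : qPI x q ≠ 0 := by
  have summable_norm : Summable fun i : ℕ => ‖-(x * q ^ i)‖ := by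
    simp only [norm_neg, norm_mul, norm_pow]
    exact (summable_geometric_of_lt_one (norm_nonneg _) hq).mul_left _
  simp only [sub_eq_add_neg] at h
  simpa only [qPI, sub_eq_add_neg] using tprod_one_add_ne_zero_of_summable h summable_norm

lemma eventually_qPI_ne_zero {x : ℂ → ℂ} {q₀ : ℂ} (hx : ContinuousAt x q₀) (hq₀ : ‖q₀‖ < 1)
    (h : ∀ i : ℕ, 1 - x q₀ * q₀ ^ i ≠ 0) : ∀ᶠ q in 𝓝 q₀, qPI (x q) q ≠ 0 := by
  filter_upwards [eventually_forall_one_sub_mul_pow_ne_zero hx hq₀ h,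
    continuousAt_id.norm.eventually_lt_const hq₀] with q hne hq
  exact qPI_ne_zero hq hne

end Pochhammer

section BasicHypergeometric

/-- The `r`-th term of the basic hypergeometric series `₂φ₁(c, q; b; q, z)`; the factors
`(q;q)_r` of its numerator and denominator are cancelled. If `1 - b q^i = 0` then all terms with
`r > i` are `0`, by the convention `x / 0 = 0`. -/
def basicHypTerm (c b q z : ℂ) (r : ℕ) : ℂ := qPF c q r / qPF b q r * z ^ r

/-- The basic hypergeometric series `₂φ₁(c, q; b; q, z) = ∑ (c;q)_r / (b;q)_r z^r`, of which the
series in `VfunC` is an instance. -/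
def basicHyp (c b q z : ℂ) : ℂ := ∑' r, basicHypTerm c b q z r

lemma basicHypTerm_zero (c b q z : ℂ) : basicHypTerm c b q z 0 = 1 := by
  simp [basicHypTerm, qPF]

lemma basicHypTerm_succ (c b q z : ℂ) (r : ℕ) :
    basicHypTerm c b q z (r + 1) =
      (1 - c * q ^ r) / (1 - b * q ^ r) * z * basicHypTerm c b q z r := by
  rw [basicHypTerm, qPF_succ, qPF_succ, mul_div_mul_comm, pow_succ, basicHypTerm]
  ring

lemma basicHypTerm_succ' (c b q z : ℂ) (r : ℕ) :
    basicHypTerm c b q z (r + 1) =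
      (1 - c) / (1 - b) * z * basicHypTerm (c * q) (b * q) q z r := by
  rw [basicHypTerm, qPF_succ', qPF_succ', mul_div_mul_comm, pow_succ, basicHypTerm]
  ring

lemma eventually_norm_basicHypTerm_succ_le {c b z : ℂ → ℂ} {q₀ : ℂ} {k : ℝ}
    (hc : ContinuousAt c q₀) (hb : ContinuousAt b q₀) (hz : ContinuousAt z q₀)
    (hq₀ : ‖q₀‖ < 1) (hk : ‖z q₀‖ < k) :
    ∀ᶠ p : ℕ × ℂ in atTop ×ˢ 𝓝 q₀,
      ‖basicHypTerm (c p.2) (b p.2) p.2 (z p.2) (p.1 + 1)‖ ≤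
        k * ‖basicHypTerm (c p.2) (b p.2) p.2 (z p.2) p.1‖ := by
  have ratio_tendsto : Tendsto
      (fun p : ℕ × ℂ => (1 - c p.2 * p.2 ^ p.1) / (1 - b p.2 * p.2 ^ p.1) * z p.2)
      (atTop ×ˢ 𝓝 q₀) (𝓝 ((1 - 0) / (1 - 0) * z q₀)) :=
    (((tendsto_mul_pow_atTop_prod_nhds hc hq₀).const_sub 1).div
      ((tendsto_mul_pow_atTop_prod_nhds hb hq₀).const_sub 1) (by norm_num)).mul
      (hz.tendsto.comp tendsto_snd)
  rw [sub_zero, div_one, one_mul] at ratio_tendsto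
  filter_upwards [ratio_tendsto.norm.eventually_lt_const hk] with p hp
  rw [basicHypTerm_succ, norm_mul]
  gcongr

lemma summable_basicHypTerm (c b : ℂ) {q z : ℂ} (hq : ‖q‖ < 1) (hz : ‖z‖ < 1) :
    Summable (basicHypTerm c b q z) := by
  obtain ⟨k, hzk, hk₁⟩ := exists_between hz
  have ratio_le := eventually_norm_basicHypTerm_succ_le (c := fun _ => c) (b := fun _ => b)
    (z := fun _ => z) continuousAt_const continuousAt_const continuousAt_const hq hzk
  exact summable_of_ratio_norm_eventually_le hk₁
    ((tendsto_id.prodMk tendsto_const_nhds).eventually ratio_le)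

theorem basicHyp_eq_one_add (c b : ℂ) {q z : ℂ} (hq : ‖q‖ < 1) (hz : ‖z‖ < 1) :
    basicHyp c b q z = 1 + (1 - c) / (1 - b) * z * basicHyp (c * q) (b * q) q z := by
  rw [basicHyp, (summable_basicHypTerm c b hq hz).tsum_eq_zero_add, basicHypTerm_zero]
  simp only [basicHypTerm_succ', tsum_mul_left, basicHyp]

theorem analyticAt_basicHyp {c b z : ℂ → ℂ} {q₀ : ℂ} (hc : AnalyticAt ℂ c q₀)
    (hb : AnalyticAt ℂ b q₀) (hz : AnalyticAt ℂ z q₀) (hq₀ : ‖q₀‖ < 1) (hz₁ : ‖z q₀‖ < 1)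
    (hb_ne : ∀ i : ℕ, 1 - b q₀ * q₀ ^ i ≠ 0) :
    AnalyticAt ℂ (fun q => basicHyp (c q) (b q) q (z q)) q₀ := by
  obtain ⟨k, hzk, hk₁⟩ := exists_between hz₁
  have terms_analytic :
      ∀ᶠ q in 𝓝 q₀, ∀ r, AnalyticAt ℂ (fun w => basicHypTerm (c w) (b w) w (z w) r) q := by
    filter_upwards [hc.eventually_analyticAt, hb.eventually_analyticAt, hz.eventually_analyticAt,
      eventually_forall_one_sub_mul_pow_ne_zero hb.continuousAt hq₀ hb_ne] with q hcq hbq hzq hne r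
    exact ((analyticAt_qPF hcq r).div (analyticAt_qPF hbq r) (qPF_ne_zero hne r)).mul (hzq.pow r)
  exact analyticAt_tsum_of_ratio_norm_eventually_le ((norm_nonneg _).trans hzk.le) hk₁
    terms_analytic (eventually_norm_basicHypTerm_succ_le hc.continuousAt hb.continuousAt
      hz.continuousAt hq₀ hzk)

end BasicHypergeometric

section RegularPart

/-- The series with `∑ VtermC = 1 + (1 - 2q)² / (q (1 - 2q + 2q²)) * tailV`: the series in `VfunC`
without its first term, divided by its second. -/
def tailV (q : ℂ) : ℂ :=
  basicHyp (1 - q) (q ^ 2 * (1 - q) / (1 - q + q ^ 2)) q (-(1 - 2 * q) / (1 - q + q ^ 2))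

lemma analyticAt_tailV : AnalyticAt ℂ tailV (1 / 2) := by
  have den_ne : (1 - 1 / 2 + (1 / 2) ^ 2 : ℂ) ≠ 0 := by norm_num
  refine analyticAt_basicHyp (by fun_prop) (by fun_prop (disch := exact den_ne))
    (by fun_prop (disch := exact den_ne)) (by norm_num) (by norm_num) ?_
  exact one_sub_mul_pow_ne_zero (by norm_num) (by norm_num)

lemma tsum_VtermC {q : ℂ} (hq₀ : q ≠ 0) (hq₁ : 1 - q ≠ 0) (hden : 1 - q + q ^ 2 ≠ 0)
    (hq : ‖q‖ < 1) (hz : ‖-(1 - 2 * q) / (1 - q + q ^ 2)‖ < 1) :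
    ∑' r, VtermC q r = 1 + (1 - 2 * q) ^ 2 / (q * (1 - 2 * q + 2 * q ^ 2)) * tailV q := by
  have numerator_eq : (aF q)⁻¹ * (vF q)⁻¹ * q = (1 - q) / q := by
    unfold aF vF; field_simp
  have denominator_eq : (vF q)⁻¹ * q = q * (1 - q) / (1 - q + q ^ 2) := by
    unfold vF; field_simp
  have argument_eq : -(aF q) * (1 - 2 * q) / q ^ 2 = -(1 - 2 * q) / (1 - q + q ^ 2) := by
    unfold aF; field_simp
  have shifted_numerator : (1 - q) / q * q = 1 - q := div_mul_cancel₀ _ hq₀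
  have shifted_denominator :
      q * (1 - q) / (1 - q + q ^ 2) * q = q ^ 2 * (1 - q) / (1 - q + q ^ 2) := by ring
  have one_sub_denominator :
      1 - q * (1 - q) / (1 - q + q ^ 2) = (1 - 2 * q + 2 * q ^ 2) / (1 - q + q ^ 2) := by
    field_simp; ring
  have second_term : (1 - (1 - q) / q) / (1 - q * (1 - q) / (1 - q + q ^ 2)) *
      (-(1 - 2 * q) / (1 - q + q ^ 2)) = (1 - 2 * q) ^ 2 / (q * (1 - 2 * q + 2 * q ^ 2)) := by
    rw [one_sub_denominator]; field_simp; ring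
  have tsum_eq_basicHyp : ∑' r, VtermC q r = basicHyp ((aF q)⁻¹ * (vF q)⁻¹ * q) ((vF q)⁻¹ * q) q
      (-(aF q) * (1 - 2 * q) / q ^ 2) := rfl
  rw [tsum_eq_basicHyp, numerator_eq, denominator_eq, argument_eq, basicHyp_eq_one_add _ _ hq hz,
    second_term, shifted_numerator, shifted_denominator, tailV]

lemma eventually_tsum_VtermC : ∀ᶠ q in 𝓝 (1 / 2 : ℂ),
    ∑' r, VtermC q r = 1 + (1 - 2 * q) ^ 2 / (q * (1 - 2 * q + 2 * q ^ 2)) * tailV q := by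
  have den_half_ne : (1 - 1 / 2 + (1 / 2) ^ 2 : ℂ) ≠ 0 := by norm_num
  have argument_cont : ContinuousAt (fun q : ℂ => -(1 - 2 * q) / (1 - q + q ^ 2)) (1 / 2) := by
    fun_prop (disch := exact den_half_ne)
  filter_upwards [eventually_ne_nhds (by norm_num : (1 / 2 : ℂ) ≠ 0),
    eventually_ne_nhds (by norm_num : (1 / 2 : ℂ) ≠ 1),
    ContinuousAt.eventually_ne (g := fun q : ℂ => 1 - q + q ^ 2) (by fun_prop) den_half_ne,
    continuousAt_id.norm.eventually_lt_const (by norm_num : ‖(1 / 2 : ℂ)‖ < 1),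
    argument_cont.norm.eventually_lt_const (by norm_num : _ < (1 : ℝ))]
    with q hq₀ hq₁ hden hq hz
  exact tsum_VtermC hq₀ (sub_ne_zero.mpr hq₁.symm) hden hq hz

lemma PAreg_eq_CF_sub_AF_mul_tsum {q : ℂ} (hq₀ : q ≠ 0) (hq₁ : 1 - q ≠ 0)
    (hQ : qPI q q ≠ 0) (ha : qPI (aF q) q ≠ 0) (hv : qPI (vF q) q ≠ 0)
    (hav : qPI (aF q * vF q) q ≠ 0) : PAreg q = CF q - AF q * ∑' r, VtermC q r := by
  have one_add_eq : 1 + (1 - 2 * q) / q ^ 2 = (1 - q) ^ 2 / q ^ 2 := by field_simp; ring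
  rw [PAreg, DF, VfunC, one_add_eq]
  field_simp
  ring

lemma CF_sub_AF {q : ℂ} (hq₁ : 1 - q ≠ 0) (hq₂ : 1 - 2 * q ≠ 0) :
    CF q - AF q = 1 / (1 - 2 * q) + (3 * q - 1) / (1 - q) := by
  unfold CF AF; field_simp; ring

lemma AF_mul_one_sub_two_mul_sq_div_mul {q : ℂ} (hq₀ : q ≠ 0) (hq₂ : 1 - 2 * q ≠ 0) (h : ℂ) :
    AF q * ((1 - 2 * q) ^ 2 / (q * (1 - 2 * q + 2 * q ^ 2)) * h) =
      2 * (1 - q) ^ 2 / (1 - 2 * q + 2 * q ^ 2) * h := by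
  unfold AF; field_simp

lemma eventually_PAreg_eq :
    ∀ᶠ q in 𝓝 (1 / 2 : ℂ), PAreg q = CF q - AF q * ∑' r, VtermC q r := by
  have aF_half : aF (1 / 2) = 1 / 3 := by norm_num [aF]
  have vF_half : vF (1 / 2) = 3 / 2 := by norm_num [vF]
  have aF_cont : ContinuousAt aF (1 / 2) :=
    ContinuousAt.div (by fun_prop) (by fun_prop) (by norm_num)
  have vF_cont : ContinuousAt vF (1 / 2) :=
    ContinuousAt.div (by fun_prop) (by fun_prop) (by norm_num)
  have half_lt : ‖(1 / 2 : ℂ)‖ < 1 := by norm_num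
  have vF_factor_ne (i : ℕ) : 1 - vF (1 / 2) * (1 / 2) ^ i ≠ 0 := by
    rw [vF_half]
    cases i with
    | zero => norm_num
    | succ i =>
      rw [pow_succ', ← mul_assoc]
      exact one_sub_mul_pow_ne_zero (by norm_num) half_lt.le i
  filter_upwards [eventually_ne_nhds (by norm_num : (1 / 2 : ℂ) ≠ 0),
    eventually_ne_nhds (by norm_num : (1 / 2 : ℂ) ≠ 1),
    eventually_qPI_ne_zero continuousAt_id half_lt
      (one_sub_mul_pow_ne_zero half_lt half_lt.le),
    eventually_qPI_ne_zero aF_cont half_lt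
      (one_sub_mul_pow_ne_zero (by norm_num [aF_half]) half_lt.le),
    eventually_qPI_ne_zero vF_cont half_lt vF_factor_ne,
    eventually_qPI_ne_zero (aF_cont.mul vF_cont) half_lt
      (one_sub_mul_pow_ne_zero (by norm_num [aF_half, vF_half]) half_lt.le)]
    with q hq₀ hq₁ hQ ha hv hav
  exact PAreg_eq_CF_sub_AF_mul_tsum hq₀ (sub_ne_zero.mpr hq₁.symm) hQ ha hv hav

end RegularPart

/-- The double-pole contributions in `PA^{reg}` cancel at `q = 1/2`:
`PA^{reg}(q) - 1/(1-2q)` extends analytically to a neighbourhood of `1/2`, so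
`PA^{reg}` has a simple pole there with singular part exactly `1/(1-2q)`. -/
theorem PAreg_simple_pole :
    ∃ g : ℂ → ℂ, AnalyticAt ℂ g (1 / 2 : ℂ) ∧
      ∀ᶠ q in 𝓝[≠] (1 / 2 : ℂ), PAreg q = 1 / (1 - 2 * q) + g q := by
  refine ⟨fun q => (3 * q - 1) / (1 - q) - 2 * (1 - q) ^ 2 / (1 - 2 * q + 2 * q ^ 2) * tailV q,
    ?_, ?_⟩
  · have hq₁ : (1 - 1 / 2 : ℂ) ≠ 0 := by norm_num
    have hden : (1 - 2 * (1 / 2) + 2 * (1 / 2) ^ 2 : ℂ) ≠ 0 := by norm_num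
    have first_analytic : AnalyticAt ℂ (fun q : ℂ => (3 * q - 1) / (1 - q)) (1 / 2) := by
      fun_prop (disch := exact hq₁)
    have coeff_analytic : AnalyticAt ℂ
        (fun q : ℂ => 2 * (1 - q) ^ 2 / (1 - 2 * q + 2 * q ^ 2)) (1 / 2) := by
      fun_prop (disch := exact hden)
    exact first_analytic.sub (coeff_analytic.mul analyticAt_tailV)
  · filter_upwards [nhdsWithin_le_nhds eventually_PAreg_eq,
      nhdsWithin_le_nhds eventually_tsum_VtermC,
      nhdsWithin_le_nhds (eventually_ne_nhds (by norm_num : (1 / 2 : ℂ) ≠ 0)),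
      nhdsWithin_le_nhds (eventually_ne_nhds (by norm_num : (1 / 2 : ℂ) ≠ 1)),
      self_mem_nhdsWithin] with q hPA hV hq₀ hq₁ hq_half
    have hq₂ : 1 - 2 * q ≠ 0 := fun h =>
      hq_half (Set.mem_singleton_iff.mpr (by linear_combination (-1 / 2 : ℂ) * h))
    rw [hPA, hV, mul_add, mul_one, ← sub_sub, CF_sub_AF (sub_ne_zero.mpr hq₁.symm) hq₂,
      AF_mul_one_sub_two_mul_sq_div_mul hq₀ hq₂, add_sub_assoc]
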